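/- arXiv:1310.1303 — 2 statements merged into one kernel-verified Lean document; each statement's English description precedes it below -/
import Mathlib

section
/- Let p > 1 be an integer, I = [0,1] if p is even and I = [-1,1] if p is odd, and M = (M_n) an increasing sequence of reals with M_0 = 1. Suppose f : I → ℝ is smooth and F(ξ) := f(ξ^p) satisfies |F^{(n)}(ξ)| ≤ C·R^n·n!·M_n on I for some constants C, R > 0. Then f satisfies |f^{(n)}(x)| ≤ C'·R'^n·n!·M_{pn} on I for some constants C', R' > 0. -/
open scoped Nat

theorem ContDiffOn.derivWithin_infty {f : ℝ → ℝ} {s : Set ℝ} (hf : ContDiffOn ℝ (⊤ : ℕ∞) f s)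
    (hs : UniqueDiffOn ℝ s) : ContDiffOn ℝ (⊤ : ℕ∞) (derivWithin f s) s :=
  hf.derivWithin hs (by simp)

theorem ContDiffOn.hasDerivWithinAt_iteratedDerivWithin {f : ℝ → ℝ} {s : Set ℝ}
    (hf : ContDiffOn ℝ (⊤ : ℕ∞) f s) (hs : UniqueDiffOn ℝ s) (k : ℕ) {x : ℝ} (hx : x ∈ s) :
    HasDerivWithinAt (iteratedDerivWithin k f s) (iteratedDerivWithin (k + 1) f s x) s x := by
  rw [iteratedDerivWithin_succ]
  refine (hf.differentiableOn_iteratedDerivWithin (m := k) ?_ hs x hx).hasDerivWithinAt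
  exact_mod_cast ENat.natCast_lt_top k

theorem iteratedDerivWithin_succ_id_mul {h : ℝ → ℝ} {s : Set ℝ}
    (hh : ContDiffOn ℝ (⊤ : ℕ∞) h s) (hs : UniqueDiffOn ℝ s) (k : ℕ) {x : ℝ} (hx : x ∈ s) :
    iteratedDerivWithin (k + 1) (fun y => y * h y) s x =
      x * iteratedDerivWithin (k + 1) h s x + (k + 1) * iteratedDerivWithin k h s x := by
  induction k generalizing x with
  | zero =>
    have h0 := hh.hasDerivWithinAt_iteratedDerivWithin hs 0 hx
    have h1 := ((hasDerivWithinAt_id x s).mul h0).derivWithin (hs x hx)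
    simp only [iteratedDerivWithin_zero, zero_add] at h1 ⊢
    rw [iteratedDerivWithin_one]
    refine Eq.trans h1 ?_
    simp
    ring
  | succ k ih =>
    have h1 := hh.hasDerivWithinAt_iteratedDerivWithin hs k hx
    have h2 := hh.hasDerivWithinAt_iteratedDerivWithin hs (k + 1) hx
    rw [iteratedDerivWithin_succ, derivWithin_congr (fun y hy => ih hy) (ih hx)]
    refine Eq.trans ((((hasDerivWithinAt_id x s).mul h2).add
      (h1.const_mul ((k : ℝ) + 1))).derivWithin (hs x hx)) ?_
    simp
    ring

/-- A maximum principle for the first-order operator `u ↦ x u' + c u` on a compact interval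
containing the origin. -/
theorem le_div_of_id_mul_deriv_add_le {s : Set ℝ} (hc : IsCompact s) (hconv : Convex ℝ s)
    (h0 : (0 : ℝ) ∈ s) {u u' : ℝ → ℝ} (hu : ∀ x ∈ s, HasDerivWithinAt u (u' x) s x)
    {c A : ℝ} (hcpos : 0 < c) (hA : ∀ x ∈ s, x * u' x + c * u x ≤ A) {x : ℝ} (hx : x ∈ s) :
    u x ≤ A / c := by
  obtain ⟨z, hz, hmax⟩ := hc.exists_isMaxOn ⟨0, h0⟩
    (fun x hx => (hu x hx).continuousWithinAt : ContinuousOn u s)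
  have hcone : -z ∈ posTangentConeAt s z := by
    apply mem_posTangentConeAt_of_segment_subset
    rw [add_neg_cancel]
    exact hconv.segment_subset hz h0
  have h1 := hmax.localize.hasFDerivWithinAt_nonpos (hu z hz).hasFDerivWithinAt hcone
  have h2 : 0 ≤ z * u' z := by simpa using h1
  have h3 : u x ≤ u z := hmax hx
  rw [le_div_iff₀ hcpos]
  nlinarith [hA z hz]

theorem abs_iteratedDerivWithin_le_of_id_mul {s : Set ℝ} (hc : IsCompact s)
    (hconv : Convex ℝ s) (h0 : (0 : ℝ) ∈ s) (hs : UniqueDiffOn ℝ s) {h : ℝ → ℝ}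
    (hh : ContDiffOn ℝ (⊤ : ℕ∞) h s) (k : ℕ) {a : ℝ}
    (ha : ∀ x ∈ s, |iteratedDerivWithin (k + 1) (fun y => y * h y) s x| ≤ (k + 1)! * a) :
    ∀ x ∈ s, |iteratedDerivWithin k h s x| ≤ k ! * a := by
  intro x hx
  have hk : (0 : ℝ) < (k : ℝ) + 1 := by positivity
  have key : ((k + 1)! : ℝ) * a / (k + 1) = k ! * a := by
    rw [Nat.factorial_succ]
    push_cast
    field_simp
  have hd : ∀ y ∈ s, HasDerivWithinAt (iteratedDerivWithin k h s)
      (iteratedDerivWithin (k + 1) h s y) s y :=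
    fun y hy => hh.hasDerivWithinAt_iteratedDerivWithin hs k hy
  rw [← key, abs_le']
  constructor
  · refine le_div_of_id_mul_deriv_add_le hc hconv h0 hd hk (fun y hy => ?_) hx
    rw [← iteratedDerivWithin_succ_id_mul hh hs k hy]
    exact (abs_le.1 (ha y hy)).2
  · refine le_div_of_id_mul_deriv_add_le hc hconv h0 (fun y hy => (hd y hy).neg) hk
      (fun y hy => ?_) hx
    have h1 := (abs_le.1 (ha y hy)).1
    rw [iteratedDerivWithin_succ_id_mul hh hs k hy] at h1
    simp only [Pi.neg_apply]
    linarith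

theorem abs_iteratedDerivWithin_le_of_pow_mul {s : Set ℝ} (hc : IsCompact s)
    (hconv : Convex ℝ s) (h0 : (0 : ℝ) ∈ s) (hs : UniqueDiffOn ℝ s) {h : ℝ → ℝ}
    (hh : ContDiffOn ℝ (⊤ : ℕ∞) h s) (k m : ℕ) {a : ℝ}
    (ha : ∀ x ∈ s, |iteratedDerivWithin (k + m) (fun y => y ^ m * h y) s x| ≤ (k + m)! * a) :
    ∀ x ∈ s, |iteratedDerivWithin k h s x| ≤ k ! * a := by
  induction m with
  | zero => simpa using ha
  | succ m ih =>
    refine ih (abs_iteratedDerivWithin_le_of_id_mul hc hconv h0 hs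
      ((contDiff_id.pow m).contDiffOn.mul hh) (k + m) ?_)
    have hpow : (fun y => y * (id y ^ m * h y)) = fun y => y ^ (m + 1) * h y := by
      ext y
      simp only [id]
      ring
    rw [hpow]
    exact ha

theorem abs_iteratedDerivWithin_derivWithin_comp_pow_le {s : Set ℝ} (hc : IsCompact s)
    (hconv : Convex ℝ s) (h0 : (0 : ℝ) ∈ s) (hs : UniqueDiffOn ℝ s) {p : ℕ} (hp : p ≠ 0)
    (hmaps : Set.MapsTo (fun x : ℝ => x ^ p) s s) {f : ℝ → ℝ}
    (hf : ContDiffOn ℝ (⊤ : ℕ∞) f s) (n : ℕ) {a : ℝ}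
    (ha : ∀ x ∈ s, |iteratedDerivWithin (p * (n + 1)) (fun y => f (y ^ p)) s x| ≤
      (p * (n + 1))! * a) :
    ∀ x ∈ s, |iteratedDerivWithin (p * n) (fun y => derivWithin f s (y ^ p)) s x| ≤
      (p * n)! * ((n + 1) * a) := by
  obtain ⟨q, rfl⟩ := Nat.exists_eq_succ_of_ne_zero hp
  simp only [Nat.succ_eq_add_one] at *
  have hq : (0 : ℝ) < (q : ℝ) + 1 := by positivity
  have hidx : (q + 1) * (n + 1) = (q + 1) * n + q + 1 := by ring
  refine abs_iteratedDerivWithin_le_of_pow_mul hc hconv h0 hs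
    ((hf.derivWithin_infty hs).comp (contDiff_id.pow (q + 1)).contDiffOn hmaps) _ q
    fun x hx => ?_
  have hderiv : Set.EqOn (derivWithin (fun y => f (y ^ (q + 1))) s)
      (fun y => ((q : ℝ) + 1) * (y ^ q * derivWithin f s (y ^ (q + 1)))) s := by
    intro y hy
    have h1 : HasDerivWithinAt f (derivWithin f s (y ^ (q + 1))) s (y ^ (q + 1)) :=
      ((hf.differentiableOn (by simp)) _ (hmaps hy)).hasDerivWithinAt
    have h2 : HasDerivWithinAt (fun x : ℝ => x ^ (q + 1))
        (((q + 1 : ℕ) : ℝ) * y ^ (q + 1 - 1)) s y := hasDerivWithinAt_pow (q + 1) y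
    refine Eq.trans ((h1.comp_of_eq y h2 hmaps rfl).derivWithin (hs y hy)) ?_
    simp
    ring
  have h2 := ha x hx
  rw [hidx, iteratedDerivWithin_succ', iteratedDerivWithin_congr hderiv hx,
    iteratedDerivWithin_const_mul_field, abs_mul, abs_of_pos hq, Nat.factorial_succ] at h2
  push_cast at h2
  refine le_of_mul_le_mul_left (h2.trans_eq ?_) hq
  ring

theorem abs_iteratedDerivWithin_pow_le_of_comp_pow {s : Set ℝ} (hc : IsCompact s)
    (hconv : Convex ℝ s) (h0 : (0 : ℝ) ∈ s) (hs : UniqueDiffOn ℝ s) {p : ℕ} (hp : p ≠ 0)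
    (hmaps : Set.MapsTo (fun x : ℝ => x ^ p) s s) {f : ℝ → ℝ}
    (hf : ContDiffOn ℝ (⊤ : ℕ∞) f s) (n : ℕ) {a : ℝ}
    (ha : ∀ x ∈ s, |iteratedDerivWithin (p * n) (fun y => f (y ^ p)) s x| ≤ (p * n)! * a) :
    ∀ x ∈ s, |iteratedDerivWithin n f s (x ^ p)| ≤ n ! * a := by
  induction n generalizing f a with
  | zero => simpa using ha
  | succ n ih =>
    intro x hx
    rw [iteratedDerivWithin_succ']
    refine (ih (hf.derivWithin_infty hs) (abs_iteratedDerivWithin_derivWithin_comp_pow_le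
      hc hconv h0 hs hp hmaps hf n ha) x hx).trans_eq ?_
    rw [Nat.factorial_succ]
    push_cast
    ring

theorem power_substitution (p : ℕ) (hp : 1 < p)
    (I : Set ℝ) (hI : I = if Even p then Set.Icc (0 : ℝ) 1 else Set.Icc (-1 : ℝ) 1)
    (M : ℕ → ℝ) (hM0 : M 0 = 1) (hMmono : Monotone M)
    (f : ℝ → ℝ) (hf : ContDiffOn ℝ (⊤ : ℕ∞) f I)
    (C R : ℝ) (hC : 0 < C) (hR : 0 < R)
    (hF : ∀ n : ℕ, ∀ ξ ∈ I,
        |iteratedDerivWithin n (fun ξ => f (ξ ^ p)) I ξ| ≤ C * R ^ n * n.factorial * M n) :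
    ∃ C' R' : ℝ, 0 < C' ∧ 0 < R' ∧ ∀ n : ℕ, ∀ x ∈ I,
        |iteratedDerivWithin n f I x| ≤ C' * R' ^ n * n.factorial * M (p * n) := by
  have hp0 : p ≠ 0 := by omega
  obtain ⟨l, hl, h0l, hmaps, hsurj⟩ : ∃ l : ℝ, I = Set.Icc l 1 ∧ l ≤ 0 ∧
      Set.MapsTo (fun x : ℝ => x ^ p) (Set.Icc l 1) (Set.Icc l 1) ∧
      Set.SurjOn (fun x : ℝ => x ^ p) (Set.Icc l 1) (Set.Icc l 1) := by
    have hcont : Continuous fun x : ℝ => x ^ p := continuous_pow p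
    by_cases he : Even p
    · refine ⟨0, by rw [hI, if_pos he], le_rfl,
        fun x hx => ⟨pow_nonneg hx.1 p, pow_le_one₀ hx.1 hx.2⟩, ?_⟩
      have := intermediate_value_Icc zero_le_one hcont.continuousOn
      simpa [hp0, Set.SurjOn] using this
    · have ho : Odd p := Nat.not_even_iff_odd.1 he
      refine ⟨-1, by rw [hI, if_neg he], by norm_num, fun x hx => ?_, ?_⟩
      · have := ho.strictMono_pow (R := ℝ) |>.monotone
        simpa [ho.neg_one_pow] using And.intro (this hx.1) (this hx.2)
      · have := intermediate_value_Icc (by norm_num : (-1 : ℝ) ≤ 1) hcont.continuousOn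
        simpa [ho.neg_one_pow, Set.SurjOn] using this
  subst hl
  refine ⟨C, R ^ p, hC, by positivity, fun n x hx => ?_⟩
  obtain ⟨ξ, hξ, rfl⟩ := hsurj hx
  refine (abs_iteratedDerivWithin_pow_le_of_comp_pow isCompact_Icc (convex_Icc l 1)
    ⟨h0l, zero_le_one⟩ (uniqueDiffOn_Icc (h0l.trans_lt one_pos)) hp0 hmaps hf n
    (a := C * R ^ (p * n) * M (p * n)) (fun y hy => (hF (p * n) y hy).trans_eq ?_) ξ
    hξ).trans_eq ?_
  · ring
  · rw [← pow_mul]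
    ring
end

section
/- Let M' = (M'_n) be a log-convex sequence of positive reals with M'_0 = 1, m_k = M'_{k+1}/M'_k, and suppose m_k → ∞. Define F(ξ) = ∑_{k≥0} (M'_k/(2m_k)^k)·cos(2 m_k ξ). Then F is a well-defined smooth function on ℝ and |F^{(2n)}(0)| ≥ M'_{2n} for all n ∈ ℕ. -/
/-- A log-convex positive sequence `M` satisfies `M k * m_k ^ j ≤ M j * m_k ^ k` for all `j, k`,
where `m_k = M (k + 1) / M k`. -/
lemma mul_ratio_pow_le_of_logConvex {M : ℕ → ℝ} (hpos : ∀ n, 0 < M n)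
    (hmono : Monotone fun k => M (k + 1) / M k) (j k : ℕ) :
    M k * (M (k + 1) / M k) ^ j ≤ M j * (M (k + 1) / M k) ^ k := by
  set m : ℝ := M (k + 1) / M k with hm
  have hm0 : 0 < m := div_pos (hpos _) (hpos _)
  rcases le_total j k with hjk | hkj
  · obtain ⟨d, rfl⟩ := Nat.exists_eq_add_of_le hjk
    have key : ∀ e, e ≤ d → M (j + e) ≤ M j * m ^ e := by
      intro e
      induction e with
      | zero => simp
      | succ e ih =>
        intro he
        have h1 : M (j + e + 1) / M (j + e) ≤ m := hmono (show j + e ≤ j + d by omega)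
        rw [div_le_iff₀ (hpos _)] at h1
        calc M (j + (e + 1)) ≤ m * M (j + e) := h1
          _ ≤ m * (M j * m ^ e) := by gcongr; exact ih (by omega)
          _ = M j * m ^ (e + 1) := by ring
    calc M (j + d) * m ^ j ≤ M j * m ^ d * m ^ j := by gcongr; exact key d le_rfl
      _ = M j * m ^ (j + d) := by ring
  · obtain ⟨d, rfl⟩ := Nat.exists_eq_add_of_le hkj
    have key : ∀ e, M k * m ^ e ≤ M (k + e) := by
      intro e
      induction e with
      | zero => simp
      | succ e ih =>
        have h1 : m ≤ M (k + e + 1) / M (k + e) := hmono (show k ≤ k + e by omega)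
        rw [le_div_iff₀ (hpos _)] at h1
        calc M k * m ^ (e + 1) = m * (M k * m ^ e) := by ring
          _ ≤ m * M (k + e) := by gcongr
          _ ≤ M (k + (e + 1)) := h1
    calc M k * m ^ (k + d) = M k * m ^ d * m ^ k := by ring
      _ ≤ M (k + d) * m ^ k := by gcongr; exact key d

lemma iteratedDeriv_const_mul_cos_mul (a c : ℝ) (j : ℕ) (x : ℝ) :
    iteratedDeriv j (fun y => a * Real.cos (c * y)) x =
      a * (c ^ j * iteratedDeriv j Real.cos (c * x)) := by
  rw [iteratedDeriv_const_mul_field, iteratedDeriv_comp_const_mul Real.contDiff_cos]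

theorem bang_function (M : ℕ → ℝ) (hpos : ∀ n, 0 < M n) (h0 : M 0 = 1)
    (hlc : ∀ n : ℕ, 1 ≤ n → (M n) ^ 2 ≤ M (n - 1) * M (n + 1))
    (htend : Filter.Tendsto (fun k => M (k + 1) / M k) Filter.atTop Filter.atTop)
    (F : ℝ → ℝ)
    (hF : F = fun ξ => ∑' k : ℕ,
        (M k / (2 * (M (k + 1) / M k)) ^ k) * Real.cos (2 * (M (k + 1) / M k) * ξ)) :
    ContDiff ℝ (⊤ : ℕ∞) F ∧ ∀ n : ℕ, M (2 * n) ≤ |iteratedDeriv (2 * n) F 0| := by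
  have hmono : Monotone fun k => M (k + 1) / M k := by
    refine monotone_nat_of_le_succ fun k => ?_
    rw [div_le_div_iff₀ (hpos _) (hpos _)]
    have := hlc (k + 1) (by omega)
    simp only [Nat.add_sub_cancel] at this
    nlinarith
  set c : ℕ → ℝ := fun k => 2 * (M (k + 1) / M k) with hc
  have hc0 : ∀ k, 0 < c k := fun k => mul_pos two_pos (div_pos (hpos _) (hpos _))
  set a : ℕ → ℝ := fun k => M k / c k ^ k with ha
  have ha0 : ∀ k, 0 < a k := fun k => div_pos (hpos _) (pow_pos (hc0 k) _)
  set f : ℕ → ℝ → ℝ := fun k ξ => a k * Real.cos (c k * ξ) with hf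
  have hFf : F = fun ξ => ∑' k, f k ξ := hF
  have hbound : ∀ j k, a k * c k ^ j ≤ M j * 2 ^ j * (1 / 2) ^ k := by
    intro j k
    have h := mul_ratio_pow_le_of_logConvex hpos hmono j k
    rw [ha]
    simp only
    rw [div_mul_eq_mul_div, div_le_iff₀ (pow_pos (hc0 k) _), hc]
    simp only
    rw [mul_pow, mul_pow]
    calc M k * (2 ^ j * (M (k + 1) / M k) ^ j) = 2 ^ j * (M k * (M (k + 1) / M k) ^ j) := by ring
      _ ≤ 2 ^ j * (M j * (M (k + 1) / M k) ^ k) := by gcongr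
      _ = M j * 2 ^ j * ((1 / 2) ^ k * 2 ^ k) * (M (k + 1) / M k) ^ k := by
        rw [← mul_pow]; norm_num; ring
      _ = _ := by ring
  have hsum : ∀ j, Summable fun k => a k * c k ^ j := fun j =>
    .of_nonneg_of_le (fun k => (mul_pos (ha0 k) (pow_pos (hc0 k) _)).le) (hbound j)
      (summable_geometric_two.mul_left _)
  have hderiv : ∀ (j k : ℕ) (x : ℝ), ((j : ℕ∞) ≤ ⊤) →
      ‖iteratedFDeriv ℝ j (f k) x‖ ≤ a k * c k ^ j := by
    intro j k x _
    rw [norm_iteratedFDeriv_eq_norm_iteratedDeriv, hf, iteratedDeriv_const_mul_cos_mul,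
      Real.norm_eq_abs, abs_mul, abs_mul, abs_of_pos (ha0 k), abs_of_pos (pow_pos (hc0 k) j),
      ← mul_assoc]
    exact mul_le_of_le_one_right (mul_pos (ha0 k) (pow_pos (hc0 k) _)).le
      (Real.abs_iteratedDeriv_cos_le_one j _)
  have hcd : ∀ k, ContDiff ℝ (⊤ : ℕ∞) (f k) := fun k =>
    contDiff_const.mul (Real.contDiff_cos.comp (contDiff_const.mul contDiff_id))
  have hsmooth : ContDiff ℝ (⊤ : ℕ∞) fun ξ => ∑' k, f k ξ :=
    contDiff_tsum hcd (fun j _ => hsum j) hderiv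
  refine ⟨by rw [hFf]; exact hsmooth, fun n => ?_⟩
  have hSummable : Summable fun k => iteratedFDeriv ℝ (2 * n) (f k) 0 :=
    .of_norm_bounded (hsum (2 * n)) fun k => hderiv (2 * n) k 0 le_top
  have hval : iteratedDeriv (2 * n) F 0 = ∑' k, (-1) ^ n * (a k * c k ^ (2 * n)) := by
    rw [iteratedDeriv_eq_iteratedFDeriv, hFf,
      iteratedFDeriv_tsum_apply hcd (fun j _ => hsum j) hderiv (k := 2 * n) le_top,
      ContinuousMultilinearMap.tsum_eval hSummable]
    refine tsum_congr fun k => ?_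
    rw [← iteratedDeriv_eq_iteratedFDeriv, hf, iteratedDeriv_const_mul_cos_mul,
      Real.iteratedDeriv_even_cos]
    simp
    ring
  rw [hval, tsum_mul_left, abs_mul, abs_pow, abs_neg, abs_one, one_pow, one_mul]
  have hterm : M (2 * n) = a (2 * n) * c (2 * n) ^ (2 * n) :=
    (div_mul_cancel₀ _ (pow_pos (hc0 _) _).ne').symm
  rw [hterm]
  exact ((hsum (2 * n)).le_tsum (2 * n)
    fun k _ => (mul_pos (ha0 k) (pow_pos (hc0 k) _)).le).trans (le_abs_self _)
end
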